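/- For every prime power q, one has h(1) < h(2)^{1/2}. -/

import Mathlib

/-!
Write `x = |P|⁻¹ ∈ (0, 1/2]` and `S = ∑_P x²`. Counting all monic polynomials of degree `n ≥ 1`
gives `S ≤ ∑_{n ≥ 1} q^n q^{-2n} = 1 / (q - 1) ≤ 1`. Termwise,
`u_P - v_P = -log (1 - x²) ≤ (4/3) x²` and
`u_P² + v_P² ≥ (u_P + v_P)² / 2 ≥ 2 x²`, the latter because
`u_P + v_P = log ((1 + x) / (1 - x)) ≥ 2 x`. Hence
`h(1)² ≤ (16/9) S² ≤ (16/9) S < 2 S ≤ h(2)`.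
-/

open Polynomial

/-- `u_P = -log(1 - |P|⁻¹)` where `|P| = q^(deg P)`. -/
noncomputable def uP {Fq : Type} [Field Fq] [Fintype Fq] (P : Polynomial Fq) : ℝ :=
  -Real.log (1 - ((Fintype.card Fq : ℝ) ^ P.natDegree)⁻¹)

/-- `v_P = log(1 + |P|⁻¹)` where `|P| = q^(deg P)`. -/
noncomputable def vP {Fq : Type} [Field Fq] [Fintype Fq] (P : Polynomial Fq) : ℝ :=
  Real.log (1 + ((Fintype.card Fq : ℝ) ^ P.natDegree)⁻¹)

/-- `h(λ) = ∑_P (u_P^λ + (-1)^λ v_P^λ)`, the sum over all monic irreducible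
polynomials `P ∈ Fq[X]`. -/
noncomputable def hfun (Fq : Type) [Field Fq] [Fintype Fq] (l : ℕ) : ℝ :=
  ∑' P : {P : Polynomial Fq // P.Monic ∧ Irreducible P},
    (uP P.1 ^ l + (-1 : ℝ) ^ l * vP P.1 ^ l)

/-- `|P|⁻¹`. -/
noncomputable def invAbs {Fq : Type} [Field Fq] [Fintype Fq] (P : Polynomial Fq) : ℝ :=
  ((Fintype.card Fq : ℝ) ^ P.natDegree)⁻¹

lemma two_le_card (Fq : Type) [Field Fq] [Fintype Fq] : (2 : ℝ) ≤ Fintype.card Fq := by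
  exact_mod_cast Fintype.one_lt_card (α := Fq)

lemma invAbs_pos {Fq : Type} [Field Fq] [Fintype Fq] (P : Polynomial Fq) : 0 < invAbs P := by
  have := two_le_card Fq
  unfold invAbs
  positivity

lemma invAbs_le {Fq : Type} [Field Fq] [Fintype Fq] (P : Polynomial Fq)
    (hP : Irreducible P) : invAbs P ≤ 1 / 2 := by
  have hq := two_le_card Fq
  have h1 : (2 : ℝ) ≤ (Fintype.card Fq : ℝ) ^ P.natDegree :=
    hq.trans (le_self_pow₀ (by linarith) hP.natDegree_pos.ne')
  unfold invAbs
  rw [one_div]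
  exact inv_anti₀ (by norm_num) h1

/-- The data `(n, (a_0, …, a_n))` of a monic polynomial of degree `n + 1` with lower
coefficients `a_i`. -/
noncomputable def monicCode {Fq : Type} [Field Fq]
    (P : {P : Polynomial Fq // P.Monic ∧ Irreducible P}) : Σ n : ℕ, (Fin (n + 1) → Fq) :=
  ⟨P.1.natDegree - 1, fun i => P.1.coeff i⟩

lemma monicCode_injective {Fq : Type} [Field Fq] :
    Function.Injective (monicCode (Fq := Fq)) := by
  -- Decoding by `X ^ (n + 1) + ∑ a_i X ^ i` recovers the polynomial.
  let dec : (Σ n : ℕ, (Fin (n + 1) → Fq)) → Polynomial Fq :=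
    fun s => X ^ (s.1 + 1) + ∑ i : Fin (s.1 + 1), C (s.2 i) * X ^ (i : ℕ)
  have hdec : ∀ P, dec (monicCode P) = P.1 := by
    rintro ⟨P, hm, hi⟩
    have hd : P.natDegree - 1 + 1 = P.natDegree := Nat.sub_add_cancel hi.natDegree_pos
    simp only [dec, monicCode]
    rw [Fin.sum_univ_eq_sum_range (fun i => C (P.coeff i) * X ^ i), hd]
    exact hm.as_sum.symm
  intro P Q h
  apply Subtype.ext
  rw [← hdec P, ← hdec Q, h]

/-- `|P|⁻²`, read off from the code of `P`. -/
noncomputable def codeWeight (Fq : Type) [Fintype Fq] (s : Σ n : ℕ, (Fin (n + 1) → Fq)) : ℝ :=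
  (((Fintype.card Fq : ℝ) ^ (s.1 + 1))⁻¹) ^ 2

lemma codeWeight_fiber (Fq : Type) [Field Fq] [Fintype Fq] (n : ℕ) :
    ∑' y : Fin (n + 1) → Fq, codeWeight Fq ⟨n, y⟩
      = (Fintype.card Fq : ℝ)⁻¹ * ((Fintype.card Fq : ℝ)⁻¹) ^ n := by
  classical
  have hq := two_le_card Fq
  have hq0 : (Fintype.card Fq : ℝ) ≠ 0 := by positivity
  rw [tsum_fintype]
  simp only [codeWeight, Finset.sum_const, Finset.card_univ, Fintype.card_fun, Fintype.card_fin,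
    nsmul_eq_mul, Nat.cast_pow, inv_pow]
  field_simp
  ring

lemma codeWeight_summable (Fq : Type) [Field Fq] [Fintype Fq] : Summable (codeWeight Fq) := by
  have hq := two_le_card Fq
  rw [summable_sigma_of_nonneg (fun s => by unfold codeWeight; positivity)]
  refine ⟨fun n => (hasSum_fintype _).summable, ?_⟩
  simp only [codeWeight_fiber]
  exact (summable_geometric_of_lt_one (by positivity)
    (inv_lt_one_of_one_lt₀ (by linarith))).mul_left _

lemma codeWeight_tsum_le (Fq : Type) [Field Fq] [Fintype Fq] :
    ∑' s, codeWeight Fq s ≤ 1 := by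
  have hq := two_le_card Fq
  rw [(codeWeight_summable Fq).tsum_sigma]
  simp only [codeWeight_fiber]
  rw [tsum_mul_left, tsum_geometric_of_lt_one (by positivity)
    (inv_lt_one_of_one_lt₀ (by linarith))]
  have h : (0 : ℝ) < Fintype.card Fq - 1 := by linarith
  have h' : (Fintype.card Fq : ℝ)⁻¹ * (1 - (Fintype.card Fq : ℝ)⁻¹)⁻¹
      = ((Fintype.card Fq : ℝ) - 1)⁻¹ := by
    rw [← mul_inv]
    congr 1
    field_simp
  rw [h']
  exact inv_le_one_of_one_le₀ (by linarith)

lemma codeWeight_monicCode {Fq : Type} [Field Fq] [Fintype Fq]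
    (P : {P : Polynomial Fq // P.Monic ∧ Irreducible P}) :
    codeWeight Fq (monicCode P) = invAbs P.1 ^ 2 := by
  have hd : P.1.natDegree - 1 + 1 = P.1.natDegree := Nat.sub_add_cancel P.2.2.natDegree_pos
  simp only [codeWeight, monicCode, invAbs, hd]

lemma invAbs_sq_summable (Fq : Type) [Field Fq] [Fintype Fq] :
    Summable fun P : {P : Polynomial Fq // P.Monic ∧ Irreducible P} => invAbs P.1 ^ 2 := by
  simpa only [Function.comp_def, codeWeight_monicCode] using
    (codeWeight_summable Fq).comp_injective monicCode_injective

lemma invAbs_sq_tsum_le (Fq : Type) [Field Fq] [Fintype Fq] :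
    ∑' P : {P : Polynomial Fq // P.Monic ∧ Irreducible P}, invAbs P.1 ^ 2 ≤ 1 := by
  refine le_trans ?_ (codeWeight_tsum_le Fq)
  simp only [← codeWeight_monicCode]
  exact tsum_comp_le_tsum_of_inj (codeWeight_summable Fq)
    (fun s => by unfold codeWeight; positivity) monicCode_injective

lemma invAbs_sq_tsum_pos (Fq : Type) [Field Fq] [Fintype Fq] :
    0 < ∑' P : {P : Polynomial Fq // P.Monic ∧ Irreducible P}, invAbs P.1 ^ 2 :=
  (invAbs_sq_summable Fq).tsum_pos (fun _ => sq_nonneg _) ⟨X, monic_X, irreducible_X⟩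
    (pow_pos (invAbs_pos _) 2)

lemma neg_log_one_sub_le {y : ℝ} (hy : y < 1) : -Real.log (1 - y) ≤ y / (1 - y) := by
  have h := Real.one_sub_inv_le_log_of_pos (sub_pos.2 hy)
  have h1 : (1 - y) ≠ 0 := (sub_pos.2 hy).ne'
  have h2 : y / (1 - y) = (1 - y)⁻¹ - 1 := by
    field_simp
    ring
  linarith

lemma log_diff_nonneg {x : ℝ} (h0 : 0 < x) (h1 : x ≤ 1 / 2) :
    0 ≤ -Real.log (1 - x) - Real.log (1 + x) := by
  have h : Real.log (1 - x) + Real.log (1 + x) = Real.log (1 - x ^ 2) := by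
    rw [← Real.log_mul (by linarith) (by linarith)]
    ring_nf
  have := Real.log_nonpos (x := 1 - x ^ 2) (by nlinarith) (by nlinarith)
  linarith

lemma log_diff_le {x : ℝ} (h0 : 0 < x) (h1 : x ≤ 1 / 2) :
    -Real.log (1 - x) - Real.log (1 + x) ≤ 4 / 3 * x ^ 2 := by
  have h : Real.log (1 - x) + Real.log (1 + x) = Real.log (1 - x ^ 2) := by
    rw [← Real.log_mul (by linarith) (by linarith)]
    ring_nf
  have hx : x ^ 2 ≤ 1 / 4 := by nlinarith
  have h2 := neg_log_one_sub_le (y := x ^ 2) (by linarith)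
  have h3 : x ^ 2 / (1 - x ^ 2) ≤ 4 / 3 * x ^ 2 := by
    rw [div_le_iff₀ (by linarith)]
    nlinarith [sq_nonneg x]
  linarith

lemma le_log_sq {x : ℝ} (h0 : 0 < x) (h1 : x ≤ 1 / 2) :
    2 * x ^ 2 ≤ (-Real.log (1 - x)) ^ 2 + Real.log (1 + x) ^ 2 := by
  have hx : 0 < 1 - x := by linarith
  -- `2t / (t + 2) ≤ log (1 + t)` at `t = 2x / (1 - x)` reads `2x ≤ log ((1 + x) / (1 - x))`.
  have ht := Real.le_log_one_add_of_nonneg (x := 2 * x / (1 - x)) (by positivity)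
  have e1 : 1 + 2 * x / (1 - x) = (1 + x) / (1 - x) := by
    field_simp
    ring
  have e2 : 2 * (2 * x / (1 - x)) / (2 * x / (1 - x) + 2) = 2 * x := by
    have : 2 * x / (1 - x) + 2 = 2 / (1 - x) := by
      field_simp
      ring
    rw [this]
    field_simp
  rw [e1, e2, Real.log_div (by linarith) hx.ne'] at ht
  nlinarith [sq_nonneg (-Real.log (1 - x) - Real.log (1 + x))]

lemma log_sq_le {x : ℝ} (h0 : 0 < x) (h1 : x ≤ 1 / 2) :
    (-Real.log (1 - x)) ^ 2 + Real.log (1 + x) ^ 2 ≤ 5 * x ^ 2 := by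
  have hv0 : 0 ≤ Real.log (1 + x) := Real.log_nonneg (by linarith)
  have hv : Real.log (1 + x) ≤ x := by
    have := Real.log_le_sub_one_of_pos (x := 1 + x) (by linarith)
    linarith
  have hu0 : Real.log (1 - x) ≤ 0 := Real.log_nonpos (by linarith) (by linarith)
  have hu : -Real.log (1 - x) ≤ 2 * x := by
    refine (neg_log_one_sub_le (by linarith)).trans ?_
    rw [div_le_iff₀ (by linarith)]
    nlinarith
  have := pow_le_pow_left₀ hv0 hv 2
  have := pow_le_pow_left₀ (neg_nonneg.2 hu0) hu 2
  nlinarith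

/-- For every prime power `q` (realized as the cardinality of a finite field `Fq`),
one has `h(1) < h(2)^(1/2)` (real power). -/
theorem hfun_one_lt (Fq : Type) [Field Fq] [Fintype Fq] :
    hfun Fq 1 < hfun Fq 2 ^ ((1 : ℝ) / 2) := by
  have hS := invAbs_sq_summable Fq
  have hS1 := invAbs_sq_tsum_le Fq
  have hS0 := invAbs_sq_tsum_pos Fq
  have e1 : hfun Fq 1 = ∑' P : {P : Polynomial Fq // P.Monic ∧ Irreducible P},
      (-Real.log (1 - invAbs P.1) - Real.log (1 + invAbs P.1)) :=
    tsum_congr fun P => by simp only [uP, vP, invAbs]; ring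
  have e2 : hfun Fq 2 = ∑' P : {P : Polynomial Fq // P.Monic ∧ Irreducible P},
      ((-Real.log (1 - invAbs P.1)) ^ 2 + Real.log (1 + invAbs P.1) ^ 2) :=
    tsum_congr fun P => by simp only [uP, vP, invAbs]; ring
  set S := ∑' P : {P : Polynomial Fq // P.Monic ∧ Irreducible P}, invAbs P.1 ^ 2 with hSdef
  have hsum1 := Summable.of_nonneg_of_le
    (fun P : {P : Polynomial Fq // P.Monic ∧ Irreducible P} =>
      log_diff_nonneg (invAbs_pos P.1) (invAbs_le P.1 P.2.2))
    (fun P => log_diff_le (invAbs_pos P.1) (invAbs_le P.1 P.2.2)) (hS.mul_left (4 / 3))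
  have hsum2 := Summable.of_nonneg_of_le
    (fun P : {P : Polynomial Fq // P.Monic ∧ Irreducible P} =>
      add_nonneg (sq_nonneg (-Real.log (1 - invAbs P.1))) (sq_nonneg (Real.log (1 + invAbs P.1))))
    (fun P => log_sq_le (invAbs_pos P.1) (invAbs_le P.1 P.2.2)) (hS.mul_left 5)
  have b0 : 0 ≤ hfun Fq 1 := by
    rw [e1]
    exact tsum_nonneg fun P => log_diff_nonneg (invAbs_pos P.1) (invAbs_le P.1 P.2.2)
  have b1 : hfun Fq 1 ≤ 4 / 3 * S := by
    rw [e1, hSdef, ← tsum_mul_left]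
    exact hsum1.tsum_le_tsum
      (fun P => log_diff_le (invAbs_pos P.1) (invAbs_le P.1 P.2.2)) (hS.mul_left _)
  have b2 : 2 * S ≤ hfun Fq 2 := by
    rw [e2, hSdef, ← tsum_mul_left]
    exact (hS.mul_left _).tsum_le_tsum
      (fun P => le_log_sq (invAbs_pos P.1) (invAbs_le P.1 P.2.2)) hsum2
  rw [← Real.sqrt_eq_rpow]
  apply Real.lt_sqrt_of_sq_lt
  have := pow_le_pow_left₀ b0 b1 2
  nlinarith
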